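/- arXiv:2602.06944 — 5 statements merged into one kernel-verified Lean document; each statement's English description precedes it below -/
import Mathlib

section
/- Suppose K is a stabilizing derivative-feedback gain and P is a symmetric positive definite real n×n matrix satisfying the policy-evaluation equation for K, and let K⁺ = −R⁻¹ Bᵀ A⁻ᵀ P be the policy-improvement update. Then I + B·K⁺ is invertible and (I + B·K⁺)⁻¹·A is Hurwitz; that is, the improved gain K⁺ is again a stabilizing derivative-feedback gain. -/
open Matrix MeasureTheory Filter Topology

/-- A real square matrix is Hurwitz if every complex eigenvalue has strictly
negative real part. -/
def IsHurwitz {n : ℕ} (M : Matrix (Fin n) (Fin n) ℝ) : Prop :=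
  ∀ μ ∈ spectrum ℂ (M.map (Complex.ofReal)), μ.re < 0

/-- A derivative-feedback gain `K` is stabilizing if `I + B * K` is invertible
and `(I + B * K)⁻¹ * A` is Hurwitz. -/
def IsStabilizing {n m : ℕ} (A : Matrix (Fin n) (Fin n) ℝ) (B : Matrix (Fin n) (Fin m) ℝ)
    (K : Matrix (Fin m) (Fin n) ℝ) : Prop :=
  IsUnit (1 + B * K) ∧ IsHurwitz ((1 + B * K)⁻¹ * A)

/-- The policy-evaluation (Lyapunov) equation for the gain `K`:
`P (A⁻¹(I + BK)) + (A⁻¹(I + BK))ᵀ P + Q + Kᵀ R K = 0`. -/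
def PolicyEval {n m : ℕ} (A : Matrix (Fin n) (Fin n) ℝ) (B : Matrix (Fin n) (Fin m) ℝ)
    (Q : Matrix (Fin n) (Fin n) ℝ) (R : Matrix (Fin m) (Fin m) ℝ)
    (K : Matrix (Fin m) (Fin n) ℝ) (P : Matrix (Fin n) (Fin n) ℝ) : Prop :=
  P * (A⁻¹ * (1 + B * K)) + (A⁻¹ * (1 + B * K))ᵀ * P + Q + Kᵀ * R * K = 0

/-- The policy-improvement update: `K⁺ = −R⁻¹ Bᵀ A⁻ᵀ P`. -/
noncomputable def ImprovedGain {n m : ℕ} (A : Matrix (Fin n) (Fin n) ℝ) (B : Matrix (Fin n) (Fin m) ℝ)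
    (R : Matrix (Fin m) (Fin m) ℝ) (P : Matrix (Fin n) (Fin n) ℝ) :
    Matrix (Fin m) (Fin n) ℝ :=
  -(R⁻¹ * Bᵀ * (A⁻¹)ᵀ * P)

/-- The derivative-feedback algebraic Riccati equation:
`P A⁻¹ + A⁻ᵀ P − P A⁻¹ B R⁻¹ Bᵀ A⁻ᵀ P + Q = 0`. -/
def SolvesARE {n m : ℕ} (A : Matrix (Fin n) (Fin n) ℝ) (B : Matrix (Fin n) (Fin m) ℝ)
    (Q : Matrix (Fin n) (Fin n) ℝ) (R : Matrix (Fin m) (Fin m) ℝ)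
    (P : Matrix (Fin n) (Fin n) ℝ) : Prop :=
  P * A⁻¹ + (A⁻¹)ᵀ * P - P * A⁻¹ * B * R⁻¹ * Bᵀ * (A⁻¹)ᵀ * P + Q = 0

/-!
A gain `K` is stabilizing exactly when the inverse `A⁻¹(I + BK)` of the closed loop is Hurwitz, so
all of the argument can be carried out with this matrix, which is affine in `K`. Completing the
square in the policy-evaluation equation shows that `G = A⁻¹(I + BK⁺)` satisfies the Lyapunov
equation `PG + GᵀP + Q + K⁺ᵀRK⁺ + (K⁺ - K)ᵀR(K⁺ - K) = 0`. If `Gv = μv` with `0 ≤ Re μ`, then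
`v* P v ≥ 0` makes every term of the resulting quadratic form vanish, so `K⁺v = Kv`, and `μ` is
also an eigenvalue of `A⁻¹(I + BK)`, which is impossible.
-/

lemma mem_spectrum_iff_exists_mulVec_eq_smul {ι 𝕜 : Type*} [Fintype ι] [DecidableEq ι] [Field 𝕜]
    {M : Matrix ι ι 𝕜} {μ : 𝕜} : μ ∈ spectrum 𝕜 M ↔ ∃ v ≠ 0, M *ᵥ v = μ • v := by
  rw [spectrum.mem_iff, isUnit_iff_isUnit_det, isUnit_iff_ne_zero, not_not,
    ← exists_mulVec_eq_zero_iff]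
  refine exists_congr fun v ↦ and_congr_right fun _ ↦ ?_
  rw [sub_mulVec, sub_eq_zero, Algebra.algebraMap_eq_smul_one, smul_mulVec, one_mulVec, eq_comm]

section PositiveSemidefinite

open scoped ComplexOrder

variable {ι κ 𝕜 : Type*} [RCLike 𝕜]

lemma conjTranspose_map_ofReal (N : Matrix κ ι ℝ) :
    (N.map (algebraMap ℝ 𝕜))ᴴ = Nᵀ.map (algebraMap ℝ 𝕜) := by
  ext
  simp

lemma posSemidef_map_ofReal [Finite ι] {M : Matrix ι ι ℝ} (hM : M.PosSemidef) :
    (M.map (algebraMap ℝ 𝕜)).PosSemidef := by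
  classical
  have := Fintype.ofFinite ι
  open scoped MatrixOrder in
  obtain ⟨N, rfl⟩ := CStarAlgebra.nonneg_iff_eq_star_mul_self.mp hM.nonneg
  rw [star_eq_conjTranspose, conjTranspose_eq_transpose_of_trivial, Matrix.map_mul,
    ← conjTranspose_map_ofReal]
  exact posSemidef_conjTranspose_mul_self _

lemma posDef_map_ofReal [Finite ι] {M : Matrix ι ι ℝ} (hM : M.PosDef) :
    (M.map (algebraMap ℝ 𝕜)).PosDef := by
  classical
  have := Fintype.ofFinite ι
  exact (posSemidef_map_ofReal hM.posSemidef).posDef_iff_isUnit.mpr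
    (hM.isUnit.map (algebraMap ℝ 𝕜).mapMatrix)

lemma mulVec_eq_zero_of_lyapunov [Fintype ι] {G P W : Matrix ι ι 𝕜} (hP : P.PosSemidef)
    (hW : W.PosSemidef) (h : P * G + Gᴴ * P + W = 0) {μ : 𝕜} (hμ : 0 ≤ RCLike.re μ) {v : ι → 𝕜}
    (hv : G *ᵥ v = μ • v) : W *ᵥ v = 0 := by
  have hPG : star v ⬝ᵥ (P * G) *ᵥ v = μ * (star v ⬝ᵥ P *ᵥ v) := by
    rw [← mulVec_mulVec, hv, mulVec_smul, dotProduct_smul, smul_eq_mul]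
  have hGP : star v ⬝ᵥ (Gᴴ * P) *ᵥ v = star μ * (star v ⬝ᵥ P *ᵥ v) := by
    rw [← mulVec_mulVec, dotProduct_mulVec, ← star_mulVec, hv, star_smul, smul_dotProduct,
      smul_eq_mul]
  have hvWv : star v ⬝ᵥ W *ᵥ v = -((μ + star μ) * (star v ⬝ᵥ P *ᵥ v)) := by
    rw [eq_neg_iff_add_eq_zero, add_mul, ← hPG, ← hGP, add_comm, ← dotProduct_add,
      ← dotProduct_add, ← add_mulVec, ← add_mulVec, h, zero_mulVec, dotProduct_zero]
  have hμ' : 0 ≤ μ + star μ := by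
    rw [RCLike.star_def, RCLike.add_conj]
    exact_mod_cast mul_nonneg zero_le_two hμ
  refine (hW.dotProduct_mulVec_zero_iff v).mp (le_antisymm ?_ (hW.dotProduct_mulVec_nonneg v))
  rw [hvWv]
  exact neg_nonpos.mpr (mul_nonneg hμ' (hP.dotProduct_mulVec_nonneg v))

end PositiveSemidefinite

lemma mulVec_eq_zero_of_add_conjTranspose_mul_mul {ι κ α : Type*} [Fintype ι] [Fintype κ] [Ring α]
    [PartialOrder α] [IsOrderedAddMonoid α] [StarRing α] {S : Matrix ι ι α} {R : Matrix κ κ α}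
    {D : Matrix κ ι α} (hS : S.PosSemidef) (hR : R.PosDef) {v : ι → α}
    (h : (S + Dᴴ * R * D) *ᵥ v = 0) : D *ᵥ v = 0 := by
  by_contra hDv
  have hsum : star v ⬝ᵥ S *ᵥ v + star (D *ᵥ v) ⬝ᵥ R *ᵥ (D *ᵥ v) = 0 := by
    rw [star_mulVec, ← dotProduct_mulVec, mulVec_mulVec, mulVec_mulVec, ← dotProduct_add,
      ← add_mulVec, h, dotProduct_zero]
  exact (add_pos_of_nonneg_of_pos (hS.dotProduct_mulVec_nonneg v)
    (hR.dotProduct_mulVec_pos hDv)).ne' hsum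

section Hurwitz

variable {n m : ℕ} {M : Matrix (Fin n) (Fin n) ℝ}

lemma IsHurwitz.isUnit (hM : IsHurwitz M) : IsUnit M := by
  have hMℂ : IsUnit (M.map Complex.ofReal) :=
    (spectrum.zero_notMem_iff ℂ).mp fun h0 ↦ (hM 0 h0).false
  rw [isUnit_iff_isUnit_det, ← isUnit_map_iff Complex.ofRealHom, RingHom.map_det]
  exact (isUnit_iff_isUnit_det _).mp hMℂ

lemma IsHurwitz.inv (hM : IsHurwitz M) : IsHurwitz M⁻¹ := by
  obtain ⟨u, rfl⟩ := hM.isUnit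
  intro μ hμ
  rw [← coe_units_inv] at hμ
  have hμ_inv : μ⁻¹ ∈ spectrum ℂ ((u : Matrix (Fin n) (Fin n) ℝ).map Complex.ofReal) :=
    spectrum.inv₀_mem_iff (a := Units.map Complex.ofRealHom.mapMatrix.toMonoidHom u) |>.mpr hμ
  have hre : μ.re / Complex.normSq μ < 0 := Complex.inv_re μ ▸ hM _ hμ_inv
  contrapose! hre
  exact div_nonneg hre (Complex.normSq_nonneg μ)

lemma isHurwitz_inv_iff : IsHurwitz M⁻¹ ↔ IsHurwitz M := by
  refine ⟨fun h ↦ ?_, IsHurwitz.inv⟩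
  have hM : IsUnit M := isUnit_nonsing_inv_iff.mp h.isUnit
  simpa only [nonsing_inv_nonsing_inv _ ((isUnit_iff_isUnit_det _).mp hM)] using h.inv

/-- Detectability of the pair `(D, G)` (state matrix `G`, output matrix `D`), encoded by the
existence of an output injection `C` that makes the observer error dynamics `G - C * D` Hurwitz. -/
def IsDetectable (G : Matrix (Fin n) (Fin n) ℝ) (D : Matrix (Fin m) (Fin n) ℝ) : Prop :=
  ∃ C : Matrix (Fin n) (Fin m) ℝ, IsHurwitz (G - C * D)

open scoped ComplexOrder in
lemma IsDetectable.isHurwitz_of_lyapunov {G P S : Matrix (Fin n) (Fin n) ℝ}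
    {R : Matrix (Fin m) (Fin m) ℝ} {D : Matrix (Fin m) (Fin n) ℝ} (hGD : IsDetectable G D)
    (hP : P.PosSemidef) (hS : S.PosSemidef) (hR : R.PosDef)
    (h : P * G + Gᵀ * P + (S + Dᵀ * R * D) = 0) : IsHurwitz G := by
  obtain ⟨C, hC⟩ := hGD
  intro μ hμ
  obtain ⟨v, hv, hGv⟩ := mem_spectrum_iff_exists_mulVec_eq_smul.mp hμ
  by_contra! hre
  have hSℂ := posSemidef_map_ofReal (𝕜 := ℂ) hS
  have hRℂ := posDef_map_ofReal (𝕜 := ℂ) hR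
  have hlyapℂ := congrArg (fun N ↦ N.map (algebraMap ℝ ℂ)) h
  simp only [Matrix.map_add _ (map_add _), Matrix.map_mul, ← conjTranspose_map_ofReal,
    Matrix.map_zero _ (map_zero _)] at hlyapℂ
  have hDv : D.map (algebraMap ℝ ℂ) *ᵥ v = 0 :=
    mulVec_eq_zero_of_add_conjTranspose_mul_mul hSℂ hRℂ <|
      mulVec_eq_zero_of_lyapunov (posSemidef_map_ofReal hP)
        (hSℂ.add (hRℂ.posSemidef.conjTranspose_mul_mul_same _)) hlyapℂ hre hGv
  have hCv : (G - C * D).map (algebraMap ℝ ℂ) *ᵥ v = μ • v := by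
    rw [Matrix.map_sub _ (map_sub _), Matrix.map_mul, sub_mulVec, ← mulVec_mulVec, hDv,
      mulVec_zero, sub_zero]
    exact hGv
  exact hre.not_gt (hC μ (mem_spectrum_iff_exists_mulVec_eq_smul.mpr ⟨v, hv, hCv⟩))

end Hurwitz

section PolicyImprovement

variable {n m : ℕ} {A P Q : Matrix (Fin n) (Fin n) ℝ} {B : Matrix (Fin n) (Fin m) ℝ}
  {R : Matrix (Fin m) (Fin m) ℝ} {K : Matrix (Fin m) (Fin n) ℝ}

lemma isStabilizing_iff_isHurwitz : IsStabilizing A B K ↔ IsHurwitz (A⁻¹ * (1 + B * K)) := by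
  have inv_eq (hA : IsUnit A) : (A⁻¹ * (1 + B * K))⁻¹ = (1 + B * K)⁻¹ * A := by
    rw [Matrix.mul_inv_rev, nonsing_inv_nonsing_inv _ ((isUnit_iff_isUnit_det A).mp hA)]
  constructor
  · rintro ⟨-, h⟩
    rw [← isHurwitz_inv_iff, inv_eq (isUnit_of_mul_isUnit_right h.isUnit)]
    exact h
  · intro h
    have hA : IsUnit A := isUnit_nonsing_inv_iff.mp (isUnit_of_mul_isUnit_left h.isUnit)
    exact ⟨isUnit_of_mul_isUnit_right h.isUnit, inv_eq hA ▸ h.inv⟩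

lemma mul_improvedGain (hR : IsUnit R) : R * ImprovedGain A B R P = -(Bᵀ * A⁻¹ᵀ * P) := by
  rw [ImprovedGain, Matrix.mul_neg]
  simp only [Matrix.mul_assoc]
  rw [mul_nonsing_inv_cancel_left _ _ ((isUnit_iff_isUnit_det R).mp hR)]

lemma PolicyEval.lyapunov_of_mul_eq (h : PolicyEval A B Q R K P) (hR : R.IsSymm) (hP : P.IsSymm)
    {L : Matrix (Fin m) (Fin n) ℝ} (hL : R * L = -(Bᵀ * A⁻¹ᵀ * P)) :
    P * (A⁻¹ * (1 + B * L)) + (A⁻¹ * (1 + B * L))ᵀ * P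
      + (Q + Lᵀ * R * L + (L - K)ᵀ * R * (L - K)) = 0 := by
  have hBP : Bᵀ * (A⁻¹ᵀ * P) = -(R * L) := by rw [hL, neg_neg, Matrix.mul_assoc]
  have hPB : P * A⁻¹ * B = -(Lᵀ * R) := by
    simpa only [transpose_mul, transpose_neg, transpose_transpose, hR.eq, hP.eq,
      ← Matrix.mul_assoc] using congrArg transpose hBP
  have lyapunov_eq (X : Matrix (Fin m) (Fin n) ℝ) :
      P * (A⁻¹ * (1 + B * X)) + (A⁻¹ * (1 + B * X))ᵀ * P =
        P * A⁻¹ + A⁻¹ᵀ * P - Lᵀ * R * X - Xᵀ * (R * L) := by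
    calc P * (A⁻¹ * (1 + B * X)) + (A⁻¹ * (1 + B * X))ᵀ * P
      _ = P * A⁻¹ + A⁻¹ᵀ * P + P * A⁻¹ * B * X + Xᵀ * (Bᵀ * (A⁻¹ᵀ * P)) := by
        simp only [transpose_mul, transpose_add, Matrix.mul_add, Matrix.add_mul,
          Matrix.mul_one, Matrix.mul_assoc]
        abel
      _ = P * A⁻¹ + A⁻¹ᵀ * P - Lᵀ * R * X - Xᵀ * (R * L) := by
        rw [hBP, hPB, Matrix.neg_mul, Matrix.mul_neg, ← sub_eq_add_neg, ← sub_eq_add_neg]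
  rw [PolicyEval, lyapunov_eq] at h
  rw [lyapunov_eq, ← h]
  simp only [transpose_sub, Matrix.sub_mul, Matrix.mul_sub, Matrix.mul_assoc]
  abel

theorem policy_improvement_stabilizing_general (hQ : Q.PosSemidef) (hR : R.PosDef)
    (hK : IsStabilizing A B K) (hP : P.PosSemidef) (hPE : PolicyEval A B Q R K P) :
    IsStabilizing A B (ImprovedGain A B R P) := by
  set L := ImprovedGain A B R P
  rw [isStabilizing_iff_isHurwitz] at hK ⊢
  have hdetect : IsDetectable (A⁻¹ * (1 + B * L)) (L - K) := by
    refine ⟨A⁻¹ * B, ?_⟩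
    convert hK using 1
    simp only [Matrix.mul_add, Matrix.mul_sub, Matrix.mul_assoc]
    abel
  exact hdetect.isHurwitz_of_lyapunov hP (hQ.add (hR.posSemidef.conjTranspose_mul_mul_same L)) hR
    (hPE.lyapunov_of_mul_eq hR.isHermitian hP.isHermitian (mul_improvedGain hR.isUnit))

end PolicyImprovement

/-- Policy improvement preserves stabilizability: if `K` is a stabilizing
derivative-feedback gain and `P > 0` solves the policy-evaluation equation for `K`,
then the improved gain `K⁺ = −R⁻¹ Bᵀ A⁻ᵀ P` is again stabilizing, i.e.
`I + B K⁺` is invertible and `(I + B K⁺)⁻¹ A` is Hurwitz. -/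
theorem policy_improvement_stabilizing {n m : ℕ} (hn : 0 < n) (hm : 0 < m)
    (A : Matrix (Fin n) (Fin n) ℝ) (B : Matrix (Fin n) (Fin m) ℝ)
    (Q : Matrix (Fin n) (Fin n) ℝ) (R : Matrix (Fin m) (Fin m) ℝ)
    (hA : IsUnit A) (hQ : Q.PosSemidef) (hR : R.PosDef)
    (K : Matrix (Fin m) (Fin n) ℝ) (P : Matrix (Fin n) (Fin n) ℝ)
    (hK : IsStabilizing A B K) (hP : P.PosDef)
    (hPE : PolicyEval A B Q R K P) :
    IsStabilizing A B (ImprovedGain A B R P) :=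
  policy_improvement_stabilizing_general hQ hR hK hP.posSemidef hPE
end

section
/- If P* is a symmetric real n×n matrix satisfying the derivative-feedback algebraic Riccati equation and K* = −R⁻¹ Bᵀ A⁻ᵀ P*, then P* satisfies the policy-evaluation equation for K*, i.e., P*·(A⁻¹(I + B·K*)) + (A⁻¹(I + B·K*))ᵀ·P* + Q + K*ᵀ·R·K* = 0. -/
open Matrix MeasureTheory Filter Topology

/-! Since `A⁻¹(I + BK) = A⁻¹ + (A⁻¹B)K`, the equations of derivative feedback for `(A, B)` are those
of ordinary state feedback for the pair `(F, G) = (A⁻¹, A⁻¹B)`. In these terms the improved gain `K`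
is characterized by `RK = -GᵀP`, so in the policy-evaluation equation the cost term `KᵀRK` cancels
the cross term `KᵀGᵀP`. What remains is `PF + FᵀP + PGK + Q`, and substituting `K = -R⁻¹GᵀP` turns
it into the left-hand side of the Riccati equation. -/

section StateFeedback

variable {n m α : Type*} [Fintype n] [Fintype m] [CommRing α]

/-- The left-hand side of the Lyapunov equation for the cost matrix `P` of the feedback `u = K x` in
the system `ẋ = F x + G u` with state weight `Q` and input weight `R`. -/
def lyapunovResidual (F : Matrix n n α) (G : Matrix n m α) (Q : Matrix n n α) (R : Matrix m m α)
    (K : Matrix m n α) (P : Matrix n n α) : Matrix n n α :=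
  P * (F + G * K) + (F + G * K)ᵀ * P + Q + Kᵀ * R * K

theorem lyapunovResidual_of_mul_eq_neg {G : Matrix n m α} {R : Matrix m m α} {K : Matrix m n α}
    {P : Matrix n n α} (hK : R * K = -(Gᵀ * P)) (F Q : Matrix n n α) :
    lyapunovResidual F G Q R K P = P * F + Fᵀ * P + P * G * K + Q := by
  have cost_eq_neg_cross : Kᵀ * R * K = -(Kᵀ * Gᵀ * P) := by
    rw [Matrix.mul_assoc, hK, Matrix.mul_neg, Matrix.mul_assoc]
  calc lyapunovResidual F G Q R K P
      = P * F + P * G * K + (Fᵀ * P + Kᵀ * Gᵀ * P) + Q + Kᵀ * R * K := by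
        rw [lyapunovResidual, transpose_add, transpose_mul, Matrix.mul_add, Matrix.add_mul,
          Matrix.mul_assoc P G K]
    _ = P * F + Fᵀ * P + P * G * K + Q := by
        rw [cost_eq_neg_cross]
        abel

variable [DecidableEq m]

/-- The left-hand side of the continuous-time algebraic Riccati equation of the system
`ẋ = F x + G u` with state weight `Q` and input weight `R`. -/
noncomputable def riccatiResidual (F : Matrix n n α) (G : Matrix n m α) (Q : Matrix n n α)
    (R : Matrix m m α) (P : Matrix n n α) : Matrix n n α :=
  P * F + Fᵀ * P - P * G * R⁻¹ * Gᵀ * P + Q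

/-- The gain `K` produced from the cost matrix `P` by policy improvement, with the sign convention
`u = K x`. -/
noncomputable def greedyGain (G : Matrix n m α) (R : Matrix m m α) (P : Matrix n n α) :
    Matrix m n α :=
  -(R⁻¹ * Gᵀ * P)

theorem mul_greedyGain {R : Matrix m m α} (hR : IsUnit R) (G : Matrix n m α) (P : Matrix n n α) :
    R * greedyGain G R P = -(Gᵀ * P) := by
  rw [greedyGain, Matrix.mul_neg, Matrix.mul_assoc,
    mul_nonsing_inv_cancel_left R _ ((isUnit_iff_isUnit_det R).1 hR)]

theorem are_solution_is_self_evaluating_general {R : Matrix m m α} (hR : IsUnit R)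
    (F : Matrix n n α) (G : Matrix n m α) (Q P : Matrix n n α) :
    lyapunovResidual F G Q R (greedyGain G R P) P = riccatiResidual F G Q R P := by
  rw [lyapunovResidual_of_mul_eq_neg (mul_greedyGain hR G P), riccatiResidual, greedyGain,
    Matrix.mul_neg, ← sub_eq_add_neg]
  simp only [Matrix.mul_assoc]

end StateFeedback

section DerivativeFeedback

variable {n m : ℕ} (A : Matrix (Fin n) (Fin n) ℝ) (B : Matrix (Fin n) (Fin m) ℝ)
  (Q : Matrix (Fin n) (Fin n) ℝ) (R : Matrix (Fin m) (Fin m) ℝ)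
  (K : Matrix (Fin m) (Fin n) ℝ) (P : Matrix (Fin n) (Fin n) ℝ)

theorem policyEval_iff_lyapunovResidual_eq_zero :
    PolicyEval A B Q R K P ↔ lyapunovResidual A⁻¹ (A⁻¹ * B) Q R K P = 0 := by
  rw [PolicyEval, lyapunovResidual, Matrix.mul_add, Matrix.mul_one, Matrix.mul_assoc A⁻¹ B K]

theorem solvesARE_iff_riccatiResidual_eq_zero :
    SolvesARE A B Q R P ↔ riccatiResidual A⁻¹ (A⁻¹ * B) Q R P = 0 := by
  simp only [SolvesARE, riccatiResidual, transpose_mul, Matrix.mul_assoc]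

theorem improvedGain_eq_greedyGain : ImprovedGain A B R P = greedyGain (A⁻¹ * B) R P := by
  simp only [ImprovedGain, greedyGain, transpose_mul, Matrix.mul_assoc]

end DerivativeFeedback

/-- An ARE solution evaluates its own improved gain: if the symmetric matrix
`P*` satisfies the derivative-feedback ARE and `K* = −R⁻¹ Bᵀ A⁻ᵀ P*`, then `P*`
satisfies the policy-evaluation equation for `K*`. -/
theorem are_solution_is_self_evaluating {n m : ℕ} (hn : 0 < n) (hm : 0 < m)
    (A : Matrix (Fin n) (Fin n) ℝ) (B : Matrix (Fin n) (Fin m) ℝ)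
    (Q : Matrix (Fin n) (Fin n) ℝ) (R : Matrix (Fin m) (Fin m) ℝ)
    (hA : IsUnit A) (hQ : Q.PosSemidef) (hR : R.PosDef)
    (Pstar : Matrix (Fin n) (Fin n) ℝ)
    (hPsymm : Pstar.IsSymm) (hARE : SolvesARE A B Q R Pstar) :
    PolicyEval A B Q R (ImprovedGain A B R Pstar) Pstar := by
  rwa [policyEval_iff_lyapunovResidual_eq_zero, improvedGain_eq_greedyGain,
    are_solution_is_self_evaluating_general hR.isUnit, ← solvesARE_iff_riccatiResidual_eq_zero]
end

section
/- If M is a Hurwitz real n×n matrix, then the matrix exponential exp(t·M) tends to the zero matrix as t → ∞; consequently, for every initial condition x₀ ∈ ℝⁿ the solution t ↦ exp(t·M)·x₀ of the linear system x' = M x tends to 0 as t → ∞. -/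
open Matrix Filter Topology

/-!
Inside the bicommutant of an element `a` of a complex Banach algebra, which is commutative and
contains the inverses of those of its elements that are invertible, Gelfand theory gives
`σ(exp a) = exp(σ(a))`. So if `σ(a)` lies in the open left half-plane, then `exp a` has spectral
radius less than one and its powers tend to zero. As `exp (t • a)` is the product of
`exp a ^ ⌊t⌋₊` and of an element of the compact set `{exp (s • a) | 0 ≤ s ≤ 1}`, it tends to zero
as well. For real matrices, apply this after the embedding into complex matrices.
-/

theorem isUnit_coe_centralizer_iff {R A : Type*} [CommSemiring R] [Semiring A] [Algebra R A]
    {s : Set A} {x : Subalgebra.centralizer R s} : IsUnit (x : A) ↔ IsUnit x := by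
  refine ⟨fun ⟨u, hu⟩ ↦ ?_, fun h ↦ h.map (Subalgebra.centralizer R s).val⟩
  have inv_mem : (↑u⁻¹ : A) ∈ Subalgebra.centralizer R s := fun g hg ↦
    (show Commute g u from hu ▸ x.2 g hg).units_inv_right
  exact ⟨⟨x, ⟨↑u⁻¹, inv_mem⟩, Subtype.ext (by simp [← hu]), Subtype.ext (by simp [← hu])⟩, rfl⟩

theorem spectrum_coe_centralizer {R A : Type*} [CommRing R] [Ring A] [Algebra R A] {s : Set A}
    (x : Subalgebra.centralizer R s) :
    spectrum R (x : A) = spectrum R x := by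
  ext r
  exact (isUnit_coe_centralizer_iff (x := algebraMap R _ r - x)).not

section BanachAlgebra

open NormedSpace

theorem spectrum_exp_of_commRing {A : Type*} [NormedCommRing A] [NormedAlgebra ℂ A]
    [CompleteSpace A] (a : A) : spectrum ℂ (exp a) = Complex.exp '' spectrum ℂ a := by
  let : NormedAlgebra ℚ A := .restrictScalars ℚ ℂ A
  ext z
  simp only [Set.mem_image, WeakDual.CharacterSpace.mem_spectrum_iff_exists,
    exists_exists_eq_and, Complex.exp_eq_exp_ℂ]
  exact exists_congr fun φ ↦ by rw [map_exp φ (map_continuous φ)]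

theorem tendsto_exp_smul_of_tendsto_exp_pow {A : Type*} [NormedRing A] [NormedAlgebra ℝ A]
    [CompleteSpace A] {a : A} (ha : Tendsto (fun n : ℕ ↦ exp a ^ n) atTop (𝓝 0)) :
    Tendsto (fun t : ℝ ↦ exp (t • a)) atTop (𝓝 0) := by
  let : NormedAlgebra ℚ A := .restrictScalars ℚ ℝ A
  have exp_split (t : ℝ) (ht : 0 ≤ t) :
      exp (t • a) = exp a ^ ⌊t⌋₊ * exp (Int.fract t • a) := by
    rw [← NormedSpace.exp_nsmul, ← Nat.cast_smul_eq_nsmul ℝ, ← NormedSpace.exp_add_of_commute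
      (((Commute.refl a).smul_left _).smul_right _), ← add_smul,
      natCast_floor_eq_intCast_floor ht, Int.floor_add_fract]
  obtain ⟨C, hC⟩ := (isCompact_Icc (a := (0 : ℝ)) (b := 1)).exists_bound_of_continuousOn
    (f := fun s ↦ exp (s • a)) (exp_continuous.comp (by fun_prop)).continuousOn
  have exp_fract_bounded : IsBoundedUnder (· ≤ ·) atTop
      (norm ∘ fun t : ℝ ↦ exp (Int.fract t • a)) :=
    isBoundedUnder_of ⟨C, fun t ↦ hC _ ⟨Int.fract_nonneg t, (Int.fract_lt_one t).le⟩⟩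
  refine ((ha.comp tendsto_nat_floor_atTop).zero_mul_isBoundedUnder_le exp_fract_bounded).congr' ?_
  filter_upwards [eventually_ge_atTop 0] with t ht using (exp_split t ht).symm

variable {A : Type*} [NormedRing A] [NormedAlgebra ℂ A] [CompleteSpace A] {a : A}

theorem spectrum_exp (a : A) : spectrum ℂ (exp a) = Complex.exp '' spectrum ℂ a := by
  let : NormedAlgebra ℚ A := .restrictScalars ℚ ℂ A
  let S := Subalgebra.centralizer ℂ (Set.centralizer {a})
  have mul_comm_S (x y : S) : x * y = y * x := Subtype.ext <|
    Set.centralizer_centralizer_comm_of_comm (S := {a}) (by simp) x x.2 y y.2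
  let : NormedCommRing S := { (inferInstance : NormedRing S) with mul_comm := mul_comm_S }
  let : NormedAlgebra ℚ S := .restrictScalars ℚ ℂ S
  have : CompleteSpace S := (Set.isClosed_centralizer _).completeSpace_coe
  let b : S := ⟨a, Set.subset_centralizer_centralizer rfl⟩
  have coe_exp_b : ((exp b : S) : A) = exp a := map_exp S.val continuous_subtype_val b
  rw [← coe_exp_b, spectrum_coe_centralizer, spectrum_exp_of_commRing, ← spectrum_coe_centralizer]

theorem tendsto_pow_atTop_nhds_zero_of_spectralRadius_lt_one (ha : spectralRadius ℂ a < 1) :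
    Tendsto (fun n : ℕ ↦ a ^ n) atTop (𝓝 0) := by
  obtain ⟨r, ha_lt_r, hr⟩ := ENNReal.lt_iff_exists_nnreal_btwn.1 ha
  have norm_pow_le : ∀ᶠ n : ℕ in atTop, ‖a ^ n‖ ≤ (r : ℝ) ^ n := by
    filter_upwards [(spectrum.gelfand_formula a).eventually_lt_const ha_lt_r,
      eventually_gt_atTop 0] with n root_lt hn
    rw [one_div, ENNReal.rpow_inv_lt_iff (by positivity), ENNReal.rpow_natCast] at root_lt
    exact_mod_cast root_lt.le
  exact squeeze_zero_norm' norm_pow_le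
    (tendsto_pow_atTop_nhds_zero_of_lt_one r.2 (by exact_mod_cast hr))

theorem spectralRadius_exp_lt_one (ha : ∀ μ ∈ spectrum ℂ a, μ.re < 0) :
    spectralRadius ℂ (exp a) < 1 := by
  nontriviality A
  refine spectrum.spectralRadius_lt_of_forall_lt (exp a) (r := 1) ?_
  rw [spectrum_exp]
  rintro _ ⟨μ, hμ, rfl⟩
  rw [← NNReal.coe_lt_coe, coe_nnnorm, Complex.norm_exp, NNReal.coe_one, Real.exp_lt_one_iff]
  exact ha μ hμ

theorem hurwitz_exp_tendsto_zero_general {A B : Type*} [NormedRing A] [NormedAlgebra ℝ A]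
    [CompleteSpace A] [NormedRing B] [NormedAlgebra ℂ B] [CompleteSpace B]
    (f : A →+* B) (hf : IsInducing f) {a : A} (ha : ∀ μ ∈ spectrum ℂ (f a), μ.re < 0) :
    Tendsto (fun t : ℝ ↦ exp (t • a)) atTop (𝓝 0) := by
  let : NormedAlgebra ℚ A := .restrictScalars ℚ ℝ A
  let : NormedAlgebra ℚ B := .restrictScalars ℚ ℝ B
  simpa only [hf.tendsto_nhds_iff, Function.comp_def, map_exp f hf.continuous,
      map_real_smul f hf.continuous, map_zero] using
    tendsto_exp_smul_of_tendsto_exp_pow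
      (tendsto_pow_atTop_nhds_zero_of_spectralRadius_lt_one (spectralRadius_exp_lt_one ha))

end BanachAlgebra

/-- If `M` is Hurwitz then `exp (t • M) → 0` as `t → ∞`, and consequently every
solution `t ↦ exp (t • M) x₀` of `x' = M x` tends to `0`. -/
theorem hurwitz_exp_tendsto_zero {n : ℕ} (hn : 0 < n)
    (M : Matrix (Fin n) (Fin n) ℝ) (hM : IsHurwitz M) :
    Tendsto (fun t : ℝ => NormedSpace.exp (t • M)) atTop (𝓝 0) ∧
    ∀ x₀ : Fin n → ℝ,
      Tendsto (fun t : ℝ => (NormedSpace.exp (t • M)).mulVec x₀) atTop (𝓝 0) := by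
  have exp_tendsto : Tendsto (fun t : ℝ => NormedSpace.exp (t • M)) atTop (𝓝 0) :=
    open scoped Matrix.Norms.Operator in hurwitz_exp_tendsto_zero_general
      (B := Matrix (Fin n) (Fin n) ℂ) Complex.ofRealHom.mapMatrix
      Complex.isometry_ofReal.isEmbedding.isInducing.matrix_map hM
  refine ⟨exp_tendsto, fun x₀ ↦ ?_⟩
  have mulVec_continuous : Continuous fun X : Matrix (Fin n) (Fin n) ℝ ↦ X *ᵥ x₀ := by fun_prop
  simpa only [Function.comp_def, zero_mulVec] using (mulVec_continuous.tendsto 0).comp exp_tendsto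
end

section
/- Let M be a Hurwitz real n×n matrix and S a real n×n matrix. If P₁ and P₂ are real n×n matrices each satisfying the Lyapunov equation P·M + Mᵀ·P + S = 0, then P₁ = P₂; that is, the Lyapunov equation associated with a Hurwitz matrix has at most one solution. -/
open Matrix

/-!
The difference `D` of two solutions satisfies `D * M = -Mᵀ * D`, hence `D * f(M) = f(-Mᵀ) * D` for
every polynomial `f`. The eigenvalues of `M` lie in the open left half-plane and those of `-Mᵀ` in
the open right one, so the characteristic polynomials `p` of `M` and `q` of `-Mᵀ` are coprime, say
`u p + v q = 1`. Evaluating at `M` and using Cayley-Hamilton for both matrices,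
`D = D * (v q)(M) = (v q)(-Mᵀ) * D = 0`.
-/

section

variable {m n R : Type*} [Fintype m] [DecidableEq m] [Fintype n] [DecidableEq n]

theorem mul_pow_eq_pow_mul_of_mul_eq_mul [Semiring R]
    {A : Matrix m m R} {B : Matrix n n R} {X : Matrix n m R} (h : X * A = B * X) (k : ℕ) :
    X * A ^ k = B ^ k * X := by
  induction k with
  | zero => simp
  | succ k ih =>
    rw [pow_succ, ← Matrix.mul_assoc, ih, Matrix.mul_assoc, h, ← Matrix.mul_assoc, ← pow_succ]

theorem mul_aeval_eq_aeval_mul_of_mul_eq_mul [CommSemiring R]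
    {A : Matrix m m R} {B : Matrix n n R} {X : Matrix n m R} (h : X * A = B * X)
    (p : Polynomial R) :
    X * Polynomial.aeval A p = Polynomial.aeval B p * X := by
  induction p using Polynomial.induction_on' with
  | add p q hp hq => simp only [map_add, Matrix.mul_add, Matrix.add_mul, hp, hq]
  | monomial k a =>
    simp only [Polynomial.aeval_monomial, ← Algebra.smul_def, Matrix.mul_smul, Matrix.smul_mul,
      mul_pow_eq_pow_mul_of_mul_eq_mul h]

theorem eq_zero_of_mul_eq_mul_of_isCoprime_charpoly [CommRing R]
    {A : Matrix m m R} {B : Matrix n n R} (hAB : IsCoprime A.charpoly B.charpoly)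
    {X : Matrix n m R} (h : X * A = B * X) : X = 0 := by
  obtain ⟨u, v, huv⟩ := hAB
  have hA : Polynomial.aeval A (v * B.charpoly) = 1 := by
    simpa [aeval_self_charpoly] using congrArg (Polynomial.aeval A) huv
  have hB : Polynomial.aeval B (v * B.charpoly) = 0 := by
    rw [map_mul, aeval_self_charpoly, mul_zero]
  calc
    X = X * Polynomial.aeval A (v * B.charpoly) := by rw [hA, Matrix.mul_one]
    _ = Polynomial.aeval B (v * B.charpoly) * X := mul_aeval_eq_aeval_mul_of_mul_eq_mul h _
    _ = 0 := by rw [hB, Matrix.zero_mul]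

theorem spectrum_transpose [CommRing R] (A : Matrix n n R) :
    spectrum R Aᵀ = spectrum R A := by
  ext μ
  rw [spectrum.mem_iff, spectrum.mem_iff, ← isUnit_transpose]
  simp [transpose_sub, algebraMap_eq_diagonal]

theorem isCoprime_charpoly_iff_disjoint_spectrum {K : Type*} (L : Type*) [Field K] [Field L]
    [IsAlgClosed L] [Algebra K L] (A : Matrix m m K) (B : Matrix n n K) :
    IsCoprime A.charpoly B.charpoly ↔
      Disjoint (spectrum L (A.map (algebraMap K L))) (spectrum L (B.map (algebraMap K L))) := by
  rw [Polynomial.isCoprime_iff_aeval_ne_zero_of_isAlgClosed K L, Set.disjoint_left]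
  simp only [mem_spectrum_iff_isRoot_charpoly, charpoly_map, Polynomial.IsRoot.def,
    Polynomial.eval_map_algebraMap, imp_iff_not_or, ne_eq]

theorem lyapunov_unique_solution_general [CommRing R]
    {A : Matrix m m R} {B : Matrix n n R} (hAB : IsCoprime A.charpoly (-B).charpoly)
    {S P₁ P₂ : Matrix n m R} (h₁ : P₁ * A + B * P₁ + S = 0) (h₂ : P₂ * A + B * P₂ + S = 0) :
    P₁ = P₂ := by
  have intertwines : (P₁ - P₂) * A = -B * (P₁ - P₂) := by
    have hadd : P₁ * A + B * P₁ = P₂ * A + B * P₂ := add_right_cancel (h₁.trans h₂.symm)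
    rw [Matrix.sub_mul, Matrix.neg_mul, Matrix.mul_sub, neg_sub, sub_eq_sub_iff_add_eq_add, hadd,
      add_comm]
  exact sub_eq_zero.mp (eq_zero_of_mul_eq_mul_of_isCoprime_charpoly hAB intertwines)

end

theorem IsHurwitz.isCoprime_charpoly_neg_transpose {n : ℕ} {M : Matrix (Fin n) (Fin n) ℝ}
    (hM : IsHurwitz M) : IsCoprime M.charpoly (-Mᵀ).charpoly := by
  rw [isCoprime_charpoly_iff_disjoint_spectrum ℂ, Set.disjoint_left]
  intro μ hμ hμ'
  have hneg : -μ ∈ spectrum ℂ (M.map Complex.ofReal) := by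
    rw [← spectrum_transpose, ← Set.mem_neg, spectrum.neg_eq]
    simpa [Matrix.map_neg, transpose_map] using hμ'
  have hre : μ.re < 0 := hM μ hμ
  have hre_neg : -μ.re < 0 := hM (-μ) hneg
  linarith

/-- The Lyapunov equation `P M + Mᵀ P + S = 0` associated with a Hurwitz matrix
`M` has at most one solution. -/
theorem lyapunov_unique_solution {n : ℕ} (hn : 0 < n)
    (M S : Matrix (Fin n) (Fin n) ℝ) (hM : IsHurwitz M)
    (P₁ P₂ : Matrix (Fin n) (Fin n) ℝ)
    (h₁ : P₁ * M + Mᵀ * P₁ + S = 0)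
    (h₂ : P₂ * M + Mᵀ * P₂ + S = 0) :
    P₁ = P₂ :=
  lyapunov_unique_solution_general hM.isCoprime_charpoly_neg_transpose h₁ h₂
end

section
/- Let K be a stabilizing derivative-feedback gain and x_b ∈ ℝⁿ a constant measurement bias. Suppose x : ℝ → ℝⁿ is differentiable, the biased measurement is x̄(t) = x(t) + x_b, and x satisfies the closed loop under derivative feedback of the biased measurement: x'(t) = A x(t) + B u(t) with u(t) = −K·(x̄)'(t) for all t ≥ 0. Then x'(t) = (I + B·K)⁻¹·A · x(t) for all t ≥ 0 — the closed loop is independent of the bias x_b — and x(t) → 0 as t → ∞; i.e., the derivative-feedback loop drives the system to its true equilibrium despite the constant measurement bias. -/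
open Matrix Filter Topology

/-!
Since `x` and `x + x_b` have the same derivative, the loop reads `(I + BK) x' = A x`, from which
the bias has disappeared. It remains to see that `w' = T w` forces `w → 0` when the spectrum of `T`
lies in the open left half-plane. By Cayley–Hamilton `w` is annihilated by `∏ (T - μᵢ)`, and the
factors are peeled off one at a time: `v = (T - μ) w` solves the same equation and is annihilated by
one factor fewer, so `v → 0`, and `w' = μ w + v` is a scalar equation with vanishing forcing.
For the latter, `e^{-μt} w` has derivative `e^{-μt} v = o(e^{-t Re μ})`, hence is itself
`o(e^{-t Re μ})` by l'Hôpital's rule.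
-/

section NormedSpace

open Asymptotics Polynomial

theorem isLittleO_atTop_of_hasDerivAt {E : Type*} [NormedAddCommGroup E] [NormedSpace ℝ E]
    {f f' : ℝ → E} {b b' : ℝ → ℝ}
    (hf : ∀ᶠ t in atTop, HasDerivAt f (f' t) t) (hb : ∀ᶠ t in atTop, HasDerivAt b (b' t) t)
    (hb'_nonneg : ∀ᶠ t in atTop, 0 ≤ b' t) (hb_top : Tendsto b atTop atTop)
    (hf' : f' =o[atTop] b') : f =o[atTop] b := by
  refine isLittleO_iff.2 fun c hc => ?_
  obtain ⟨T, hT⟩ := eventually_atTop.1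
    (hf.and (hb.and (hb'_nonneg.and (isLittleO_iff.1 hf' (half_pos hc)))))
  have hbarrier : ∀ s ≥ T,
      HasDerivAt (fun r => ‖f T‖ + c / 2 * (b r - b T)) (c / 2 * b' s) s := fun s hs =>
    (((hT s hs).2.1.sub_const _).const_mul _).const_add _
  have hbound : ∀ s ≥ T, ‖f' s‖ ≤ c / 2 * b' s := fun s hs => by
    obtain ⟨-, -, hnonneg, hle⟩ := hT s hs
    rwa [Real.norm_of_nonneg hnonneg] at hle
  have hfence : ∀ t ≥ T, ‖f t‖ ≤ ‖f T‖ + c / 2 * (b t - b T) := fun t ht =>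
    image_norm_le_of_norm_deriv_right_le_deriv_boundary'
      (fun s hs => (hT s hs.1).1.continuousAt.continuousWithinAt)
      (fun s hs => (hT s hs.1).1.hasDerivWithinAt) (by simp)
      (fun s hs => (hbarrier s hs.1).continuousAt.continuousWithinAt)
      (fun s hs => (hbarrier s hs.1).hasDerivWithinAt) (fun s hs => hbound s hs.1) ⟨ht, le_rfl⟩
  filter_upwards [eventually_ge_atTop T, hb_top.eventually_ge_atTop 0,
    (hb_top.const_mul_atTop (half_pos hc)).eventually_ge_atTop (‖f T‖ - c / 2 * b T)]
    with t ht hb_nonneg hconst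
  rw [Real.norm_of_nonneg hb_nonneg]
  linarith [hfence t ht]

variable {E : Type*} [NormedAddCommGroup E] [NormedSpace ℂ E] {w : ℝ → E}

theorem tendsto_zero_of_hasDerivAt_smul_add {μ : ℂ} (hμ : μ.re < 0) {f : ℝ → E}
    (hw : ∀ᶠ t in atTop, HasDerivAt w (μ • w t + f t) t) (hf : Tendsto f atTop (𝓝 0)) :
    Tendsto w atTop (𝓝 0) := by
  have hnorm (t : ℝ) : ‖Complex.exp (-μ * t)‖ = Real.exp (-μ.re * t) := by
    simp [Complex.norm_exp]
  have hderiv : ∀ᶠ t : ℝ in atTop, HasDerivAt (fun s : ℝ => Complex.exp (-μ * s) • w s)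
      (Complex.exp (-μ * t) • f t) t := by
    filter_upwards [hw] with t ht
    have hexp : HasDerivAt (fun s : ℝ => Complex.exp (-μ * s)) (Complex.exp (-μ * t) * -μ) t := by
      simpa using ((hasDerivAt_id t).ofReal_comp.const_mul (-μ)).cexp
    exact (hexp.smul ht).congr_deriv (by module)
  have hexp_deriv (t : ℝ) : HasDerivAt (fun s => Real.exp (-μ.re * s))
      (Real.exp (-μ.re * t) * -μ.re) t := by
    simpa using ((hasDerivAt_id t).const_mul (-μ.re)).exp
  have hlittleO : (fun t : ℝ => Complex.exp (-μ * t) • f t) =o[atTop]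
      fun t => Real.exp (-μ.re * t) * -μ.re :=
    (IsBigO.of_norm_eventuallyLE (.of_forall fun t => (hnorm t).le)).smul_isLittleO
      ((isLittleO_const_iff (neg_pos.2 hμ).ne').2 hf)
  have hgrowth := isLittleO_atTop_of_hasDerivAt hderiv (.of_forall hexp_deriv)
    (.of_forall fun t => mul_nonneg (Real.exp_pos _).le (neg_pos.2 hμ).le)
    (Real.tendsto_exp_atTop.comp (tendsto_id.const_mul_atTop (neg_pos.2 hμ))) hlittleO
  refine tendsto_zero_iff_norm_tendsto_zero.2
    (hgrowth.norm_left.tendsto_div_nhds_zero.congr fun t => ?_)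
  rw [norm_smul, hnorm, mul_div_cancel_left₀ _ (Real.exp_pos _).ne']

theorem tendsto_zero_of_aeval_apply_eq_zero {T : E →L[ℂ] E} {p : ℂ[X]}
    (hp : ∀ μ, p.IsRoot μ → μ.re < 0) (hw : ∀ᶠ t in atTop, HasDerivAt w (T (w t)) t)
    (hpw : ∀ᶠ t in atTop, aeval T p (w t) = 0) : Tendsto w atTop (𝓝 0) := by
  have hp0 : p ≠ 0 := by
    rintro rfl
    exact (hp 0 eval_zero).false
  induction hdeg : p.natDegree generalizing p w with
  | zero =>
    obtain ⟨c, rfl⟩ := natDegree_eq_zero.1 hdeg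
    refine tendsto_const_nhds.congr' (hpw.mono fun t ht => ?_)
    simpa [Algebra.algebraMap_eq_smul_one, eq_comm, C_ne_zero.1 hp0] using ht
  | succ d ih =>
    obtain ⟨μ, hμ⟩ := IsAlgClosed.exists_root p
      (natDegree_pos_iff_degree_pos.1 (hdeg ▸ d.succ_pos)).ne'
    obtain ⟨q, rfl⟩ := dvd_iff_isRoot.2 hμ
    have hq0 : q ≠ 0 := right_ne_zero_of_mul hp0
    have hqdeg : q.natDegree = d := by
      rw [natDegree_mul (X_sub_C_ne_zero μ) hq0, natDegree_X_sub_C] at hdeg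
      lia
    have hdefect : Tendsto (fun t => (T - μ • 1) (w t)) atTop (𝓝 0) := by
      refine ih (fun ν hν => hp ν (hν.dvd (dvd_mul_left q _))) ?_ ?_ hq0 hqdeg
      · filter_upwards [hw] with t ht
        exact (((T - μ • 1).restrictScalars ℝ).hasFDerivAt.comp_hasDerivAt t ht).congr_deriv
          (by simp)
      · filter_upwards [hpw] with t ht
        rw [mul_comm, map_mul] at ht
        simpa [Algebra.algebraMap_eq_smul_one] using ht
    refine tendsto_zero_of_hasDerivAt_smul_add (hp μ hμ) ?_ hdefect
    filter_upwards [hw] with t ht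
    exact ht.congr_deriv (by simp)

theorem tendsto_zero_of_spectrum_re_neg [FiniteDimensional ℂ E] {T : E →L[ℂ] E}
    (hT : ∀ μ ∈ spectrum ℂ T, μ.re < 0) (hw : ∀ᶠ t in atTop, HasDerivAt w (T (w t)) t) :
    Tendsto w atTop (𝓝 0) := by
  let Φ : (E →ₗ[ℂ] E) ≃ₐ[ℂ] (E →L[ℂ] E) := Module.End.toContinuousLinearMap E
  obtain ⟨S, rfl⟩ := Φ.surjective T
  rw [AlgEquiv.spectrum_eq] at hT
  have hcayley : aeval (Φ S) S.charpoly = 0 := by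
    rw [aeval_algEquiv, AlgHom.comp_apply, LinearMap.aeval_self_charpoly, map_zero]
  refine tendsto_zero_of_aeval_apply_eq_zero (p := S.charpoly)
    (fun μ hμ => hT μ ((Module.End.mem_spectrum_iff_isRoot_charpoly S μ).2 hμ)) hw ?_
  simp [hcayley]

end NormedSpace

theorem IsHurwitz.tendsto_zero {n : ℕ} {M : Matrix (Fin n) (Fin n) ℝ} (hM : IsHurwitz M)
    {x : ℝ → Fin n → ℝ} (hx : ∀ᶠ t in atTop, HasDerivAt x (M *ᵥ x t) t) :
    Tendsto x atTop (𝓝 0) := by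
  let T := Module.End.toContinuousLinearMap (𝕜 := ℂ) _ (M.map Complex.ofReal).toLin'
  have hT : spectrum ℂ T = spectrum ℂ (M.map Complex.ofReal) := by
    rw [AlgEquiv.spectrum_eq, spectrum_toLin']
  have hcomplex : Tendsto (fun t i => (x t i : ℂ)) atTop (𝓝 0) := by
    refine tendsto_zero_of_spectrum_re_neg (T := T) (hT ▸ hM) ?_
    filter_upwards [hx] with t ht
    refine hasDerivAt_pi.2 fun i => ((hasDerivAt_pi.1 ht i).ofReal_comp).congr_deriv ?_
    exact RingHom.map_mulVec Complex.ofRealHom M (x t) i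
  refine tendsto_pi_nhds.2 fun i => ?_
  simpa [Function.comp_def] using
    (Complex.continuous_re.tendsto 0).comp (tendsto_pi_nhds.1 hcomplex i)

theorem eq_inv_mul_mulVec_of_eq_add_mulVec_neg {R ι κ l : Type*} [CommRing R] [Fintype ι]
    [DecidableEq ι] [Fintype κ] [Fintype l] {A : Matrix ι l R} {B : Matrix ι κ R}
    {K : Matrix κ ι R} (hBK : IsUnit (1 + B * K)) {v : ι → R} {y : l → R}
    (hv : v = A *ᵥ y + B *ᵥ (-(K *ᵥ v))) : v = ((1 + B * K)⁻¹ * A) *ᵥ y := by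
  have hvy : (1 + B * K) *ᵥ v = A *ᵥ y := by
    rw [add_mulVec, one_mulVec, ← mulVec_mulVec, ← eq_sub_iff_add_eq]
    rwa [mulVec_neg, ← sub_eq_add_neg] at hv
  rw [← mulVec_mulVec, ← hvy, mulVec_mulVec,
    nonsing_inv_mul _ ((isUnit_iff_isUnit_det _).1 hBK), one_mulVec]

/-- Bias rejection of derivative feedback: if `K` is stabilizing and `x` solves
`x' = A x + B u` with `u = −K (x̄)'` where `x̄ = x + x_b` is a biased measurement
(`x_b` a constant bias), then the closed loop is `x' = (I + BK)⁻¹ A x`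
independently of `x_b`, and `x(t) → 0` as `t → ∞`. -/
theorem derivative_feedback_rejects_bias {n m : ℕ} (hn : 0 < n) (hm : 0 < m)
    (A : Matrix (Fin n) (Fin n) ℝ) (B : Matrix (Fin n) (Fin m) ℝ)
    (hA : IsUnit A)
    (K : Matrix (Fin m) (Fin n) ℝ) (hK : IsStabilizing A B K)
    (xb : Fin n → ℝ) (x : ℝ → Fin n → ℝ)
    (hdiff : Differentiable ℝ x)
    (hode : ∀ t : ℝ, 0 ≤ t →
      deriv x t =
        A.mulVec (x t) +
          B.mulVec (-(K.mulVec (deriv (fun s => x s + xb) t)))) :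
    (∀ t : ℝ, 0 ≤ t → deriv x t = ((1 + B * K)⁻¹ * A).mulVec (x t)) ∧
    Tendsto x atTop (𝓝 0) := by
  have hclosed : ∀ t : ℝ, 0 ≤ t → deriv x t = ((1 + B * K)⁻¹ * A) *ᵥ x t := fun t ht => by
    have hdyn := hode t ht
    rw [deriv_add_const] at hdyn
    exact eq_inv_mul_mulVec_of_eq_add_mulVec_neg hK.1 hdyn
  refine ⟨hclosed, hK.2.tendsto_zero ?_⟩
  filter_upwards [eventually_ge_atTop 0] with t ht
  exact hclosed t ht ▸ (hdiff t).hasDerivAt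
end
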